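/- arXiv:2304.02304 — 4 statements merged into one kernel-verified Lean document; each statement's English description precedes it below -/
import Mathlib

section
/- The matrices M₁ and M₂ are invertible and satisfy the braid relation M₁·M₂·M₁ = M₂·M₁·M₂; consequently the assignment σ₁ ↦ M₁, σ₂ ↦ M₂ defines a 6-dimensional complex representation ρ of the braid group B₃ = ⟨σ₁, σ₂ | σ₁σ₂σ₁ = σ₂σ₁σ₂⟩. -/
open Matrix Polynomial

noncomputable def M1 (q l : ℂ) : Matrix (Fin 6) (Fin 6) ℂ :=
  !![q, -q^2*l, q^2, q^2, -q^2/l, 1;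
     0, l,      q^2, 0,   1/l,    1;
     0, 0,      q^2, 0,   0,      1;
     0, 0,      0,   q^2, -q^2/l, 1;
     0, 0,      0,   0,   1/l,    1;
     0, 0,      0,   0,   0,      1]

noncomputable def M2 (q l : ℂ) : Matrix (Fin 6) (Fin 6) ℂ :=
  !![1,    0,    0,   0,   0,   0;
     -1/l, 1/l,  0,   0,   0,   0;
     q,    1,    q^2, 0,   0,   0;
     -q^2, 0,    0,   q^2, 0,   0;
     l,    -l,   0,   -l,  l,   0;
     -1,   -q^2, -q,  1,   q^2, q]

/-- The braid relation set: `B₃ = ⟨σ₁, σ₂ | σ₁σ₂σ₁ = σ₂σ₁σ₂⟩` as a presented group. -/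
def braidRels : Set (FreeGroup (Fin 2)) :=
  {FreeGroup.of 0 * FreeGroup.of 1 * FreeGroup.of 0 *
    (FreeGroup.of 1 * FreeGroup.of 0 * FreeGroup.of 1)⁻¹}

/-!
The half twist `σ₁σ₂σ₁` acts by the antidiagonal matrix with entries `q, -q/λ, q², -1, qλ, -q`.
Conjugating by it rotates a matrix by a half turn and rescales the entries, and this turns the upper
triangular `M₁` into the lower triangular `M₂`. Thus `(M₁M₂M₁)M₁ = M₂(M₁M₂M₁)`, and cancelling
the last factor `M₁` gives the braid relation.
-/

theorem braid_iff_semiconjBy {S : Type*} [Semigroup S] {a b : S} (ha : IsRightRegular a) :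
    a * b * a = b * a * b ↔ SemiconjBy (a * b * a) a b := by
  rw [SemiconjBy, ← mul_assoc b (a * b), ← mul_assoc b a, ha.eq_iff]

theorem sq_add_self_add_one_eq_zero_of_isPrimitiveRoot {R : Type*} [CommRing R] [IsDomain R]
    {ζ : R} (hζ : IsPrimitiveRoot ζ 3) : ζ ^ 2 + ζ + 1 = 0 := by
  simpa [cyclotomic_three] using hζ.isRoot_cyclotomic (by decide)

section BraidGroup

variable {G : Type*} [Group G] {a b : G}

/-- The universal property of `B₃`: a pair of group elements satisfying the braid relation
determines a homomorphism sending `σ₁` (the generator `0`) and `σ₂` (the generator `1`) to them. -/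
def braidLift (h : a * b * a = b * a * b) : PresentedGroup braidRels →* G :=
  PresentedGroup.toGroup (f := ![a, b]) <| by
    rintro _ rfl
    rw [map_mul, map_inv, mul_inv_eq_one]
    simpa using h

@[simp]
theorem braidLift_of_zero (h : a * b * a = b * a * b) :
    braidLift h (PresentedGroup.of 0) = a :=
  PresentedGroup.toGroup.of _

@[simp]
theorem braidLift_of_one (h : a * b * a = b * a * b) :
    braidLift h (PresentedGroup.of 1) = b :=
  PresentedGroup.toGroup.of _

end BraidGroup

section Matrices

variable {q l : ℂ}

theorem isUpperTriangular_M1 : (M1 q l).IsUpperTriangular := by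
  intro i j hij
  fin_cases i <;> fin_cases j <;> first | rfl | exact absurd hij (by decide)

theorem isLowerTriangular_M2 : (M2 q l).IsLowerTriangular := by
  intro i j hij
  fin_cases i <;> fin_cases j <;> first | rfl | exact absurd hij (by decide)

theorem det_M1 (hl : l ≠ 0) : (M1 q l).det = q ^ 5 := by
  rw [det_of_isUpperTriangular isUpperTriangular_M1]
  simp only [M1, Fin.prod_univ_six, of_apply, cons_val]
  field_simp

theorem det_M2 (hl : l ≠ 0) : (M2 q l).det = q ^ 5 := by
  rw [det_of_isLowerTriangular _ isLowerTriangular_M2]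
  simp only [M2, Fin.prod_univ_six, of_apply, cons_val]
  field_simp

theorem isUnit_M1 (hq : q ≠ 0) (hl : l ≠ 0) : IsUnit (M1 q l) := by
  rw [isUnit_iff_isUnit_det, det_M1 hl]
  exact (pow_ne_zero 5 hq).isUnit

theorem isUnit_M2 (hq : q ≠ 0) (hl : l ≠ 0) : IsUnit (M2 q l) := by
  rw [isUnit_iff_isUnit_det, det_M2 hl]
  exact (pow_ne_zero 5 hq).isUnit

/-- The image `M₁M₂M₁` of the half twist `σ₁σ₂σ₁` (for `q² + q + 1 = 0` and `λ ≠ 0`), given by its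
entries so that it visibly is antidiagonal. -/
noncomputable def halfTwist (q l : ℂ) : Matrix (Fin 6) (Fin 6) ℂ :=
  !![0,  0,   0,  0,   0,    q;
     0,  0,   0,  0,   -q/l, 0;
     0,  0,   0,  q^2, 0,    0;
     0,  0,   -1, 0,   0,    0;
     0,  q*l, 0,  0,   0,    0;
     -q, 0,   0,  0,   0,    0]

theorem M1_mul_M2 (hq : q ^ 2 + q + 1 = 0) (hl : l ≠ 0) :
    M1 q l * M2 q l =
      !![0,  0,    0,  0, 0,   q;
         0,  0,    0,  0, -q,  q;
         0,  0,    0,  1, q^2, q;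
         0,  0,    -q, 0, 0,   q;
         0,  q,    -q, 0, -q,  q;
         -1, -q^2, -q, 1, q^2, q] := by
  ext i j
  fin_cases i <;> fin_cases j <;>
    simp only [M1, M2, mul_apply, Fin.sum_univ_six, of_apply, cons_val,
      Fin.zero_eta, Fin.mk_one, Fin.reduceFinMk] <;>
    grind

theorem M1_mul_M2_mul_M1 (hq : q ^ 2 + q + 1 = 0) (hl : l ≠ 0) :
    M1 q l * M2 q l * M1 q l = halfTwist q l := by
  rw [M1_mul_M2 hq hl]
  ext i j
  fin_cases i <;> fin_cases j <;>
    simp only [M1, halfTwist, mul_apply, Fin.sum_univ_six, of_apply, cons_val,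
      Fin.zero_eta, Fin.mk_one, Fin.reduceFinMk] <;>
    grind

theorem semiconjBy_halfTwist (hq : q ^ 3 = 1) :
    SemiconjBy (halfTwist q l) (M1 q l) (M2 q l) := by
  rw [SemiconjBy]
  ext i j
  fin_cases i <;> fin_cases j <;>
    simp only [M1, M2, halfTwist, mul_apply, Fin.sum_univ_six, of_apply, cons_val,
      Fin.zero_eta, Fin.mk_one, Fin.reduceFinMk] <;>
    grind

theorem braid_M1_M2 (hq : IsPrimitiveRoot q 3) (hl : l ≠ 0) :
    M1 q l * M2 q l * M1 q l = M2 q l * M1 q l * M2 q l := by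
  have hM1 : IsUnit (M1 q l) := isUnit_M1 (hq.ne_zero (by decide)) hl
  rw [braid_iff_semiconjBy hM1.isRegular.right,
    M1_mul_M2_mul_M1 (sq_add_self_add_one_eq_zero_of_isPrimitiveRoot hq) hl]
  exact semiconjBy_halfTwist hq.pow_eq_one

end Matrices

theorem stmt0 (q l : ℂ) (hq3 : q^3 = 1) (hq1 : q ≠ 1) (hl0 : l ≠ 0) :
    IsUnit (M1 q l) ∧ IsUnit (M2 q l) ∧
    M1 q l * M2 q l * M1 q l = M2 q l * M1 q l * M2 q l ∧
    ∃ ρ : PresentedGroup braidRels →* GL (Fin 6) ℂ,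
      (↑(ρ (PresentedGroup.of 0)) : Matrix (Fin 6) (Fin 6) ℂ) = M1 q l ∧
      (↑(ρ (PresentedGroup.of 1)) : Matrix (Fin 6) (Fin 6) ℂ) = M2 q l := by
  have hq : IsPrimitiveRoot q 3 := IsPrimitiveRoot.iff_orderOf.mpr (orderOf_eq_prime hq3 hq1)
  have hq0 : q ≠ 0 := hq.ne_zero (by decide)
  have hM1 := isUnit_M1 hq0 hl0
  have hM2 := isUnit_M2 hq0 hl0
  have hbraid := braid_M1_M2 hq hl0
  have hunits : hM1.unit * hM2.unit * hM1.unit = hM2.unit * hM1.unit * hM2.unit := Units.ext hbraid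
  exact ⟨hM1, hM2, hbraid, braidLift hunits, by simp, by simp⟩
end

section
/- (Theorem 3.6) For λ₁ ∈ ℂ \ {0, −1, 1, q, q²}, the representation ρ is irreducible (i.e., the only ρ-invariant subspaces of ℂ⁶ are {0} and ℂ⁶) if and only if λ₁² ≠ −q, λ₁² ≠ −q², λ₁³ ≠ q and λ₁³ ≠ q². -/
open Matrix Polynomial

/-- A subspace `W ⊆ ℂ⁶` is ρ-invariant if it is mapped into itself by both `M1` and `M2`
(acting on column vectors). -/
def RhoInvariant (q l : ℂ) (W : Submodule ℂ (Fin 6 → ℂ)) : Prop :=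
  (∀ x ∈ W, (M1 q l).mulVec x ∈ W) ∧ (∀ x ∈ W, (M2 q l).mulVec x ∈ W)

/-!
In a suitable basis of eigenvectors of `M1`, whether the relevant entries of `M2` vanish is decided
by the factors `l ^ 2 + q`, `l ^ 2 + q ^ 2`, `l ^ 3 - q` and `l ^ 3 - q ^ 2`. If one of them
is zero, `M2` has a zero block in this basis, so a proper nonzero coordinate subspace is invariant.

Conversely, the eigenvalues `q, l, 1 / l, 1` of `M1` are simple, so an invariant subspace `W`
contains each of the corresponding eigenvectors `e₀, …, e₃` along which some vector of `W` has a
nonzero coordinate. If no factor is zero, the entries of `M2` in row and column `0` link `e₀` with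
`e₁, e₂, e₃`, so `W` either contains all four or has zero coordinates along all four. Two nonzero
`2 × 2` minors of `M2` then take care of the double eigenvalue `q ^ 2` and give `W = ⊤` or `W = ⊥`.
-/

open Module.End (invtSubmodule)

section IrreduciblePair

variable {R m n : Type*} [CommRing R] [Fintype m] [Fintype n]

/-- Two square matrices form an irreducible pair if the algebra they generate acts irreducibly on
column vectors. -/
def IsIrreduciblePair (A B : Matrix n n R) : Prop :=
  ∀ W : Submodule R (n → R), W ∈ invtSubmodule A.mulVecLin → W ∈ invtSubmodule B.mulVecLin →
    W = ⊥ ∨ W = ⊤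

lemma comap_mem_invtSubmodule_of_intertwining {A : Matrix m m R} {A' : Matrix n n R}
    {P : Matrix m n R} (h : A * P = P * A') {W : Submodule R (m → R)}
    (hW : W ∈ invtSubmodule A.mulVecLin) :
    W.comap P.mulVecLin ∈ invtSubmodule A'.mulVecLin := by
  intro x hx
  have hAP : A *ᵥ (P *ᵥ x) ∈ W := hW hx
  simpa [h] using hAP

lemma IsIrreduciblePair.of_intertwining {A B : Matrix m m R} {A' B' : Matrix n n R}
    (h : IsIrreduciblePair A' B') {P : Matrix m n R} (hP : Function.Surjective P.mulVec)
    (hA : A * P = P * A') (hB : B * P = P * B') : IsIrreduciblePair A B := by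
  intro W hWA hWB
  have hP' : Function.Surjective P.mulVecLin := hP
  rw [← Submodule.map_comap_eq_of_surjective hP' W]
  rcases h _ (comap_mem_invtSubmodule_of_intertwining hA hWA)
    (comap_mem_invtSubmodule_of_intertwining hB hWB) with hW | hW
  · left
    rw [hW, Submodule.map_bot]
  · right
    rw [hW, Submodule.map_top, LinearMap.range_eq_top.mpr hP']

lemma isIrreduciblePair_iff_of_intertwining [DecidableEq n] {A B A' B' P : Matrix n n R}
    (hP : IsUnit P) (hA : A * P = P * A') (hB : B * P = P * B') :
    IsIrreduciblePair A B ↔ IsIrreduciblePair A' B' := by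
  lift P to (Matrix n n R)ˣ using hP
  refine ⟨fun h ↦ h.of_intertwining (P := ↑P⁻¹) ?_ ?_ ?_,
    fun h ↦ h.of_intertwining ?_ hA hB⟩
  · exact mulVec_surjective_iff_isUnit.mpr P⁻¹.isUnit
  · rw [Units.eq_inv_mul_iff_mul_eq, ← mul_assoc, ← hA, Units.mul_inv_cancel_right]
  · rw [Units.eq_inv_mul_iff_mul_eq, ← mul_assoc, ← hB, Units.mul_inv_cancel_right]
  · exact mulVec_surjective_iff_isUnit.mpr P.isUnit

lemma pi_bot_mem_invtSubmodule {A : Matrix n n R} {s : Set n}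
    (hA : ∀ i ∉ s, ∀ j ∈ s, A i j = 0) :
    Submodule.pi sᶜ (fun _ ↦ ⊥) ∈ invtSubmodule A.mulVecLin := by
  refine fun x hx i hi ↦ (Submodule.mem_bot R).mpr <| show ∑ j, A i j * x j = 0 from
    Finset.sum_eq_zero fun j _ ↦ ?_
  by_cases hj : j ∈ s
  · rw [hA i hi j hj, zero_mul]
  · rw [(Submodule.mem_bot R).mp (hx j hj), mul_zero]

lemma not_isIrreduciblePair_of_block_eq_zero [Nontrivial R] {A B : Matrix n n R} {s : Set n}
    (hs : s.Nonempty) (hs' : sᶜ.Nonempty) (hA : ∀ i ∉ s, ∀ j ∈ s, A i j = 0)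
    (hB : ∀ i ∉ s, ∀ j ∈ s, B i j = 0) : ¬ IsIrreduciblePair A B := by
  classical
  intro h
  obtain ⟨i, hi⟩ := hs
  obtain ⟨k, hk⟩ := hs'
  rcases h _ (pi_bot_mem_invtSubmodule hA) (pi_bot_mem_invtSubmodule hB) with hbot | htop
  · have hmem : Pi.single i (1 : R) ∈ Submodule.pi sᶜ (fun _ : n ↦ (⊥ : Submodule R R)) :=
      fun j hj ↦ by simp [ne_of_mem_of_not_mem hi hj |>.symm]
    simp [hbot] at hmem
  · have hmem : Pi.single k (1 : R) ∈ Submodule.pi sᶜ (fun _ : n ↦ (⊥ : Submodule R R)) := by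
      rw [htop]
      trivial
    exact one_ne_zero (α := R) (by simpa using hmem k hk)

end IrreduciblePair

section Diagonal

variable {K n : Type*} [Field K] [Fintype n] [DecidableEq n] {d : n → K}
  {W : Submodule K (n → K)}

lemma prod_sub_mul_mem_of_mem_invtSubmodule_diagonal
    (hW : W ∈ invtSubmodule (diagonal d).mulVecLin) {x : n → K} (hx : x ∈ W) (t : Finset n) :
    (fun i ↦ (∏ j ∈ t, (d i - d j)) * x i) ∈ W := by
  induction t using Finset.induction_on with
  | empty => simpa using hx
  | insert a t ha ih =>
    have hdiag : diagonal d *ᵥ (fun i ↦ (∏ j ∈ t, (d i - d j)) * x i) ∈ W := hW ih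
    convert W.sub_mem hdiag (W.smul_mem (d a) ih) using 1
    ext i
    simp [mulVec_diagonal, Finset.prod_insert ha, sub_mul, mul_assoc]

lemma single_mem_of_mem_invtSubmodule_diagonal (hW : W ∈ invtSubmodule (diagonal d).mulVecLin)
    {i : n} (hd : ∀ j, d j = d i → j = i) {x : n → K} (hx : x ∈ W) (hxi : x i ≠ 0) :
    Pi.single i 1 ∈ W := by
  have hprod : ∏ j ∈ Finset.univ.erase i, (d i - d j) ≠ 0 :=
    Finset.prod_ne_zero_iff.mpr fun j hj ↦
      sub_ne_zero.mpr fun h ↦ Finset.ne_of_mem_erase hj (hd j h.symm)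
  convert W.smul_mem ((∏ j ∈ Finset.univ.erase i, (d i - d j)) * x i)⁻¹
    (prod_sub_mul_mem_of_mem_invtSubmodule_diagonal hW hx (Finset.univ.erase i)) using 1
  ext k
  obtain rfl | hk := eq_or_ne k i
  · rw [Pi.smul_apply, Pi.single_eq_same, smul_eq_mul, inv_mul_cancel₀ (mul_ne_zero hprod hxi)]
  · simp [hk, Finset.prod_eq_zero (Finset.mem_erase.mpr ⟨hk, Finset.mem_univ k⟩)]

variable {N : Matrix n n K} {s : Set n} {i₀ : n}

lemma eq_top_of_single_mem (hd : ∀ i ∈ s, ∀ j, d j = d i → j = i)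
    (hcol : ∀ i ∈ s, i ≠ i₀ → N i i₀ ≠ 0)
    (hleft : ∀ y : n → K, (∀ i ∈ s, y i = 0) → (∀ i ∈ s, (y ᵥ* N) i = 0) → y = 0)
    (hWd : W ∈ invtSubmodule (diagonal d).mulVecLin) (hWN : W ∈ invtSubmodule N.mulVecLin)
    (hW : Pi.single i₀ 1 ∈ W) : W = ⊤ := by
  have hsingle : ∀ i ∈ s, Pi.single i 1 ∈ W := by
    intro i hi
    obtain rfl | hne := eq_or_ne i i₀
    · exact hW
    · exact single_mem_of_mem_invtSubmodule_diagonal hWd (hd i hi) (hWN hW)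
        (by simpa using hcol i hi hne)
  by_contra hne
  obtain ⟨f, hf, hWf⟩ := W.exists_le_ker_of_lt_top (lt_top_iff_ne_top.mpr hne)
  obtain ⟨y, rfl⟩ := (dotProductEquiv K n).surjective f
  refine hf ?_
  rw [hleft y (fun i hi ↦ by simpa using hWf (hsingle i hi)) fun i hi ↦ ?_, map_zero]
  have hN : y ⬝ᵥ (N *ᵥ Pi.single i 1) = 0 := hWf (hWN (hsingle i hi))
  rwa [dotProduct_mulVec, dotProduct_single_one] at hN

lemma eq_bot_of_single_notMem (hi₀ : i₀ ∈ s) (hd : ∀ i ∈ s, ∀ j, d j = d i → j = i)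
    (hrow : ∀ i ∈ s, i ≠ i₀ → N i₀ i ≠ 0)
    (hright : ∀ x : n → K, (∀ i ∈ s, x i = 0) → (∀ i ∈ s, (N *ᵥ x) i = 0) → x = 0)
    (hWd : W ∈ invtSubmodule (diagonal d).mulVecLin) (hWN : W ∈ invtSubmodule N.mulVecLin)
    (hW : Pi.single i₀ 1 ∉ W) : W = ⊥ := by
  have hsingle : ∀ i ∈ s, Pi.single i 1 ∉ W := by
    intro i hi hiW
    obtain rfl | hne := eq_or_ne i i₀
    · exact hW hiW
    · exact hW (single_mem_of_mem_invtSubmodule_diagonal hWd (hd i₀ hi₀) (hWN hiW)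
        (by simpa using hrow i hi hne))
  have hzero : ∀ i ∈ s, ∀ x ∈ W, x i = 0 := fun i hi x hx ↦ by_contra fun h ↦
    hsingle i hi (single_mem_of_mem_invtSubmodule_diagonal hWd (hd i hi) hx h)
  exact (Submodule.eq_bot_iff W).mpr fun x hx ↦
    hright x (fun i hi ↦ hzero i hi x hx) fun i hi ↦ hzero i hi _ (hWN hx)

lemma isIrreduciblePair_diagonal (hi₀ : i₀ ∈ s) (hd : ∀ i ∈ s, ∀ j, d j = d i → j = i)
    (hrow : ∀ i ∈ s, i ≠ i₀ → N i₀ i ≠ 0) (hcol : ∀ i ∈ s, i ≠ i₀ → N i i₀ ≠ 0)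
    (hright : ∀ x : n → K, (∀ i ∈ s, x i = 0) → (∀ i ∈ s, (N *ᵥ x) i = 0) → x = 0)
    (hleft : ∀ y : n → K, (∀ i ∈ s, y i = 0) → (∀ i ∈ s, (y ᵥ* N) i = 0) → y = 0) :
    IsIrreduciblePair (diagonal d) N := by
  intro W hWd hWN
  by_cases hW : Pi.single i₀ 1 ∈ W
  · exact Or.inr (eq_top_of_single_mem hd hcol hleft hWd hWN hW)
  · exact Or.inl (eq_bot_of_single_notMem hi₀ hd hrow hright hWd hWN hW)

lemma isIrreduciblePair_diagonal_mul {c : n → K} (hc : ∀ i, c i ≠ 0)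
    (hi₀ : i₀ ∈ s) (hd : ∀ i ∈ s, ∀ j, d j = d i → j = i)
    (hrow : ∀ i ∈ s, i ≠ i₀ → N i₀ i ≠ 0) (hcol : ∀ i ∈ s, i ≠ i₀ → N i i₀ ≠ 0)
    (hright : ∀ x : n → K, (∀ i ∈ s, x i = 0) → (∀ i ∈ s, (N *ᵥ x) i = 0) → x = 0)
    (hleft : ∀ y : n → K, (∀ i ∈ s, y i = 0) → (∀ i ∈ s, (y ᵥ* N) i = 0) → y = 0) :
    IsIrreduciblePair (diagonal d) (diagonal c * N) := by
  refine isIrreduciblePair_diagonal hi₀ hd (fun i hi hne ↦ ?_) (fun i hi hne ↦ ?_)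
    (fun x hx hNx ↦ hright x hx fun i hi ↦ ?_) fun y hy hyN ↦ ?_
  · simpa [hc] using hrow i hi hne
  · simpa [hc] using hcol i hi hne
  · simpa [← mulVec_mulVec, mulVec_diagonal, hc] using hNx i hi
  · have hyc : y ᵥ* diagonal c = 0 :=
      hleft _ (fun i hi ↦ by simp [vecMul_diagonal, hy i hi]) (by simpa using hyN)
    ext i
    simpa [vecMul_diagonal, hc] using congrFun hyc i

lemma isIrreduciblePair_iff_of_mul_eq_diagonal {A B L P : Matrix n n K} {c : n → K}
    (hc : ∀ i, c i ≠ 0) (hLP : L * P = diagonal c) (hA : A * P = P * diagonal d) :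
    IsIrreduciblePair A B ↔ IsIrreduciblePair (diagonal d) (diagonal c⁻¹ * (L * (B * P))) := by
  have hleft : diagonal c⁻¹ * L * P = 1 := by
    rw [mul_assoc, hLP, diagonal_mul_diagonal, ← diagonal_one]
    congr 1 with i
    exact inv_mul_cancel₀ (hc i)
  have hright : P * (diagonal c⁻¹ * L) = 1 := mul_eq_one_comm.mp hleft
  refine isIrreduciblePair_iff_of_intertwining (.of_mul_eq_one_right _ hleft) hA ?_
  rw [← mul_assoc (diagonal c⁻¹), ← mul_assoc P, hright, one_mul]

end Diagonal

section Rho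

/-- A basis of eigenvectors of `M1 q l`, as columns. The last two columns span the eigenspace of
`q ^ 2`; they are chosen such that the subspaces witnessing reducibility are coordinate subspaces in
this basis. -/
def eigenvectorMatrix (q l : ℂ) : Matrix (Fin 6) (Fin 6) ℂ :=
  !![1, -q^2*l, -q*(l^3-q),          -q*(l^2-l+1),     1-l,    -(l-1)*(l^3-q);
     0, l-q,    -(l^2+l+1),          -(l-q^2),         1,      l^3-(1-q)*(l^2+l)-q;
     0, 0,      0,                   (l-1)^2,          1-q*l,
       (l-q^2)*(-q*l^3+(1+2*q)*(l^2+l)+q^2);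
     0, 0,      (l-1)*(l+1)*(l-q^2), (l-1)*(l+q),      -l-q^2, -l^4-l^3-(1+2*q)*l^2+l+1;
     0, 0,      (l+1)*(l^3-1),       (1-q^2)*l*(l-1),  0,      0;
     0, 0,      0,                   (1-q^2)*(l-1)^2,  0,      0]

/-- The eigenvalues of `M1 q l`, in the order of the columns of `eigenvectorMatrix q l`. -/
noncomputable def M1Eigenvalues (q l : ℂ) : Fin 6 → ℂ := ![q, l, 1/l, 1, q^2, q^2]

/-- A matrix whose rows are left eigenvectors of `M1 q l`, dual to the columns of
`eigenvectorMatrix q l` up to the scalars `dualPairing q l`. -/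
def leftEigenvectorMatrix (q l : ℂ) : Matrix (Fin 6) (Fin 6) ℂ :=
  !![(q-1)*(l-q)*(l-q^2), (q+2)*l*(l-q^2), q^2*(l+1)*(l-q^2), -q*(l-q)*(l-q^2), q^2*(l-1), -q^2*l;
     0, -l*(l-1)^2*(l+1)*(l-q^2), -q^2*l*(l-1)^2*(l+1), 0, -l*(l-1)*(l-q^2), -l*(l^3-q^2);
     0, 0, 0, 0, l-1, -l;
     0, 0, 0, 0, 0, q;
     0, 0, (l-q)*(q^2*(l+1)+(q-1)*l^2-q^2*(l^4+l^3)), (l-q)*(l-q^2)*(l^3-(1-q)*(l^2+l)-q),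
       -(l-q^2)*(l^3-(1-q)*(l^2+l)-q), -(l+1)*(l+q)*(l^3-q^2);
     0, 0, -q^2*(l-q)*(l+q^2), (l-q)*(l-q^2), -(l-q^2), -(l+1)*(l+q^2)]

/-- The pairing of each row of `leftEigenvectorMatrix q l` with the corresponding column of
`eigenvectorMatrix q l`. -/
def dualPairing (q l : ℂ) : Fin 6 → ℂ :=
  ![(q-1)*(l-q)*(l-q^2), -l*(l-1)^2*(l+1)*(l-q)*(l-q^2), (l-1)^2*(l+1)*(l-q)*(l-q^2),
    (q-1)*(l-1)^2, 3*l*(l-1)*(l+1)*(l-q)*(l-q^2), -3*l*(l-1)*(l+1)*(l-q)*(l-q^2)]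

/-- The pairings of the rows of `leftEigenvectorMatrix q l` with the images under `M2 q l` of the
columns of `eigenvectorMatrix q l`. -/
def M2Pairing (q l : ℂ) : Matrix (Fin 6) (Fin 6) ℂ :=
  !![q*l, q^2*(l^2+q), q^2*l*(l^2+q^2)*(l^3-q), (l^2+q)*-(l^2+q^2), (l-q^2)*(l^2+q),
       (l-q)*(l^2+q^2)*(l^3-q);
     l^3-q^2, q^2*(l^3-q), q*(l^2+q^2)*(l^3-q)*(l^3-q^2), q*(l^2+q^2)*(l^3-q^2),
       q*(1-q)*l*(l^2-1), 0;
     l^2, q*l*(l^2+q), l^3*(l^3-q^2), l^2*(l^2+q), 0, (1-q^2)*l^3*(l^2-1);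
     -q, q, l*(l^3-q), l^2-l+1, l-1, (l-1)*(l^3-q);
     q*(l+1)*(l+q)*(l^3-q^2), l^5-2*l^3+2*q^2*l^2-q^2, q*l*(l^2+q^2)*(l^3-q)*(l^3-q^2),
       q*l*(l^2+q^2)*(l^3-q^2), (l-q)*(l^5-2*l^3+2*q^2*l^2-q^2),
       (l-q^2)*(l^2+q^2)*(l^3-q)*(l^3-q^2);
     q*(l+1)*(l+q^2), l^2+q, q*l*(l^5-2*l^3+2*q*l^2-q), q^2*l*(l^2+q), (l-q)*(l^2+q),
       (l-q^2)*(l^5-2*l^3+2*q*l^2-q)]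

variable {q l : ℂ}

lemma diagonal_fin_six {R : Type*} [Zero R] (d : Fin 6 → R) :
    diagonal d =
      !![d 0, 0, 0, 0, 0, 0; 0, d 1, 0, 0, 0, 0; 0, 0, d 2, 0, 0, 0;
         0, 0, 0, d 3, 0, 0; 0, 0, 0, 0, d 4, 0; 0, 0, 0, 0, 0, d 5] := by
  ext i j
  fin_cases i <;> fin_cases j <;> rfl

lemma M1_mul_eigenvectorMatrix (hq : q ^ 2 + q + 1 = 0) (hl0 : l ≠ 0) :
    M1 q l * eigenvectorMatrix q l = eigenvectorMatrix q l * diagonal (M1Eigenvalues q l) := by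
  simp [M1, eigenvectorMatrix, M1Eigenvalues, diagonal_fin_six, vecHead, vecTail]
  grind

lemma leftEigenvectorMatrix_mul_eigenvectorMatrix (hq : q ^ 2 + q + 1 = 0) :
    leftEigenvectorMatrix q l * eigenvectorMatrix q l = diagonal (dualPairing q l) := by
  simp [leftEigenvectorMatrix, eigenvectorMatrix, dualPairing, diagonal_fin_six, vecHead, vecTail]
  grind

lemma leftEigenvectorMatrix_mul_M2_mul_eigenvectorMatrix (hq : q ^ 2 + q + 1 = 0) (hl0 : l ≠ 0) :
    leftEigenvectorMatrix q l * (M2 q l * eigenvectorMatrix q l) = M2Pairing q l := by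
  simp [leftEigenvectorMatrix, M2, eigenvectorMatrix, M2Pairing, vecHead, vecTail]
  grind

lemma dualPairing_ne_zero (hq : q ^ 2 + q + 1 = 0) (hl0 : l ≠ 0) (hm1 : l ≠ -1) (h1 : l ≠ 1)
    (hlq : l ≠ q) (hlq2 : l ≠ q ^ 2) (i : Fin 6) : dualPairing q l i ≠ 0 := by
  have hq1 : q ≠ 1 := by grind
  fin_cases i <;>
    simp [dualPairing, hl0, h1, hlq, hlq2, hq1, sub_eq_zero, add_eq_zero_iff_eq_neg, hm1]

lemma isIrreduciblePair_M1_M2_iff (hq : q ^ 2 + q + 1 = 0) (hl0 : l ≠ 0) (hm1 : l ≠ -1)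
    (h1 : l ≠ 1) (hlq : l ≠ q) (hlq2 : l ≠ q ^ 2) :
    IsIrreduciblePair (M1 q l) (M2 q l) ↔
      IsIrreduciblePair (diagonal (M1Eigenvalues q l))
        (diagonal (dualPairing q l)⁻¹ * M2Pairing q l) := by
  rw [← leftEigenvectorMatrix_mul_M2_mul_eigenvectorMatrix hq hl0]
  exact isIrreduciblePair_iff_of_mul_eq_diagonal (dualPairing_ne_zero hq hl0 hm1 h1 hlq hlq2)
    (leftEigenvectorMatrix_mul_eigenvectorMatrix hq) (M1_mul_eigenvectorMatrix hq hl0)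

lemma not_isIrreduciblePair_M2Pairing {c d : Fin 6 → ℂ}
    (h : l ^ 2 + q = 0 ∨ l ^ 2 + q ^ 2 = 0 ∨ l ^ 3 - q = 0 ∨ l ^ 3 - q ^ 2 = 0) :
    ¬ IsIrreduciblePair (diagonal d) (diagonal c * M2Pairing q l) := by
  have hblock {s : Set (Fin 6)} (hs : s.Nonempty) (hs' : sᶜ.Nonempty)
      (hM : ∀ i ∉ s, ∀ j ∈ s, M2Pairing q l i j = 0) :
      ¬ IsIrreduciblePair (diagonal d) (diagonal c * M2Pairing q l) :=
    not_isIrreduciblePair_of_block_eq_zero hs hs'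
      (fun i hi j hj ↦ diagonal_apply_ne d (ne_of_mem_of_not_mem hj hi).symm)
      fun i hi j hj ↦ by simp [hM i hi j hj]
  rcases h with h | h | h | h
  · exact hblock (s := {1, 3, 4}) ⟨1, by simp⟩ ⟨0, by simp⟩
      (by simp [Fin.forall_fin_succ, M2Pairing, h])
  · exact hblock (s := {2, 3, 5}) ⟨2, by simp⟩ ⟨0, by simp⟩
      (by simp [Fin.forall_fin_succ, M2Pairing, h])
  · exact hblock (s := {2, 5}) ⟨2, by simp⟩ ⟨0, by simp⟩
      (by simp [Fin.forall_fin_succ, M2Pairing, h])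
  · exact hblock (s := {0, 2, 3, 5}) ⟨0, by simp⟩ ⟨1, by simp⟩
      (by simp [Fin.forall_fin_succ, M2Pairing, h])

lemma eq_of_M1Eigenvalues_eq (hq : q ^ 2 + q + 1 = 0) (hl0 : l ≠ 0) (hm1 : l ≠ -1)
    (h1 : l ≠ 1) (hlq : l ≠ q) (hlq2 : l ≠ q ^ 2) {i : Fin 6} (hi : i < 4) (j : Fin 6)
    (hij : M1Eigenvalues q l j = M1Eigenvalues q l i) : j = i := by
  fin_cases i <;> fin_cases j <;> first | rfl | (exfalso; simp [M1Eigenvalues] at hij hi <;> grind)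

lemma det_M2Pairing_submatrix_upper_right_ne_zero (hq : q ^ 2 + q + 1 = 0) (hl0 : l ≠ 0)
    (hm1 : l ≠ -1) (h1 : l ≠ 1) : ((M2Pairing q l).submatrix ![2, 3] ![4, 5]).det ≠ 0 := by
  have hq2 : 1 - q ^ 2 ≠ 0 := by grind
  have hl2 : l ^ 2 - 1 ≠ 0 := by grind
  rw [det_fin_two]
  simp [M2Pairing, hl0, hq2, hl2, sub_ne_zero.mpr h1]

lemma det_M2Pairing_submatrix_lower_left_ne_zero (hq : q ^ 2 + q + 1 = 0) (hl0 : l ≠ 0)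
    (hm1 : l ≠ -1) (h1 : l ≠ 1) (hlq : l ≠ q) (hlq2 : l ≠ q ^ 2) :
    ((M2Pairing q l).submatrix ![4, 5] ![0, 1]).det ≠ 0 := by
  have hdet : ((M2Pairing q l).submatrix ![4, 5] ![0, 1]).det =
      q * (2 * q + 1) * l * (l + 1) * (l - 1) * (l - q) ^ 2 * (l - q ^ 2) := by
    simp only [det_fin_two, M2Pairing, submatrix_apply, of_apply, cons_val]
    grind
  have hq0 : q ≠ 0 := by grind
  have hq' : 2 * q + 1 ≠ 0 := by grind
  rw [hdet]
  simp [hq0, hq', hl0, h1, hlq, hlq2, sub_eq_zero, add_eq_zero_iff_eq_neg, hm1]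

lemma eq_zero_of_M2Pairing_mulVec (hq : q ^ 2 + q + 1 = 0) (hl0 : l ≠ 0) (hm1 : l ≠ -1)
    (h1 : l ≠ 1) {x : Fin 6 → ℂ} (hx : ∀ i < 4, x i = 0)
    (hMx : ∀ i < 4, (M2Pairing q l *ᵥ x) i = 0) : x = 0 := by
  have hrow (i : Fin 6) (hi : i < 4) :
      M2Pairing q l i 4 * x 4 + M2Pairing q l i 5 * x 5 = 0 := by
    simpa [mulVec, dotProduct, Fin.sum_univ_six, hx] using hMx i hi
  have hzero : ![x 4, x 5] = 0 :=
    eq_zero_of_mulVec_eq_zero (det_M2Pairing_submatrix_upper_right_ne_zero hq hl0 hm1 h1) <| by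
      ext k
      fin_cases k
      · simpa [mulVec, dotProduct] using hrow 2 (by decide)
      · simpa [mulVec, dotProduct] using hrow 3 (by decide)
  have hx4 : x 4 = 0 := congrFun hzero 0
  have hx5 : x 5 = 0 := congrFun hzero 1
  ext i
  fin_cases i <;> simp [hx, hx4, hx5]

lemma eq_zero_of_vecMul_M2Pairing (hq : q ^ 2 + q + 1 = 0) (hl0 : l ≠ 0) (hm1 : l ≠ -1)
    (h1 : l ≠ 1) (hlq : l ≠ q) (hlq2 : l ≠ q ^ 2) {y : Fin 6 → ℂ} (hy : ∀ i < 4, y i = 0)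
    (hyM : ∀ i < 4, (y ᵥ* M2Pairing q l) i = 0) : y = 0 := by
  have hcol (j : Fin 6) (hj : j < 4) :
      y 4 * M2Pairing q l 4 j + y 5 * M2Pairing q l 5 j = 0 := by
    simpa [vecMul, dotProduct, Fin.sum_univ_six, hy] using hyM j hj
  have hzero : ![y 4, y 5] = 0 :=
    eq_zero_of_vecMul_eq_zero
      (det_M2Pairing_submatrix_lower_left_ne_zero hq hl0 hm1 h1 hlq hlq2) <| by
      ext k
      fin_cases k
      · simpa [vecMul, dotProduct] using hcol 0 (by decide)
      · simpa [vecMul, dotProduct] using hcol 1 (by decide)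
  have hy4 : y 4 = 0 := congrFun hzero 0
  have hy5 : y 5 = 0 := congrFun hzero 1
  ext i
  fin_cases i <;> simp [hy, hy4, hy5]

lemma isIrreduciblePair_M2Pairing (hq : q ^ 2 + q + 1 = 0) (hl0 : l ≠ 0) (hm1 : l ≠ -1)
    (h1 : l ≠ 1) (hlq : l ≠ q) (hlq2 : l ≠ q ^ 2) {c : Fin 6 → ℂ} (hc : ∀ i, c i ≠ 0)
    (hA : l ^ 2 + q ≠ 0) (hB : l ^ 2 + q ^ 2 ≠ 0) (hC : l ^ 3 - q ≠ 0) (hD : l ^ 3 - q ^ 2 ≠ 0) :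
    IsIrreduciblePair (diagonal (M1Eigenvalues q l)) (diagonal c * M2Pairing q l) := by
  have hq0 : q ≠ 0 := by grind
  refine isIrreduciblePair_diagonal_mul hc (s := {i | i < 4}) (i₀ := 0) (by simp)
    (fun i hi ↦ eq_of_M1Eigenvalues_eq hq hl0 hm1 h1 hlq hlq2 hi) ?_ ?_
    (fun x ↦ eq_zero_of_M2Pairing_mulVec hq hl0 hm1 h1)
    fun y ↦ eq_zero_of_vecMul_M2Pairing hq hl0 hm1 h1 hlq hlq2
  · simp [Fin.forall_fin_succ, M2Pairing, hq0, hl0, hA, hB, hC, -neg_add_rev]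
  · simp [Fin.forall_fin_succ, M2Pairing, hq0, hl0, hD]

end Rho

theorem stmt13 (q l : ℂ) (hq3 : q^3 = 1) (hq1 : q ≠ 1) (hl0 : l ≠ 0)
    (hm1 : l ≠ -1) (h1 : l ≠ 1) (hq : l ≠ q) (hq2 : l ≠ q^2) :
    (∀ W : Submodule ℂ (Fin 6 → ℂ), RhoInvariant q l W → W = ⊥ ∨ W = ⊤) ↔
      (l^2 ≠ -q ∧ l^2 ≠ -q^2 ∧ l^3 ≠ q ∧ l^3 ≠ q^2) := by
  have hq0 : q ^ 2 + q + 1 = 0 :=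
    (mul_eq_zero.mp (by linear_combination hq3 : (q - 1) * (q ^ 2 + q + 1) = 0)).resolve_left
      (sub_ne_zero.mpr hq1)
  have hirr : (∀ W, RhoInvariant q l W → W = ⊥ ∨ W = ⊤) ↔ IsIrreduciblePair (M1 q l) (M2 q l) :=
    forall_congr' fun W ↦ and_imp
  have hfactors : (l^2 ≠ -q ∧ l^2 ≠ -q^2 ∧ l^3 ≠ q ∧ l^3 ≠ q^2) ↔
      (l ^ 2 + q ≠ 0 ∧ l ^ 2 + q ^ 2 ≠ 0 ∧ l ^ 3 - q ≠ 0 ∧ l ^ 3 - q ^ 2 ≠ 0) := by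
    simp only [ne_eq, sub_eq_zero, add_eq_zero_iff_eq_neg]
  rw [hirr, isIrreduciblePair_M1_M2_iff hq0 hl0 hm1 h1 hq hq2, hfactors]
  refine ⟨fun h ↦ ?_, fun ⟨hA, hB, hC, hD⟩ ↦ isIrreduciblePair_M2Pairing hq0 hl0 hm1 h1 hq hq2
    (fun i ↦ inv_ne_zero (dualPairing_ne_zero hq0 hl0 hm1 h1 hq hq2 i)) hA hB hC hD⟩
  contrapose! h
  exact not_isIrreduciblePair_M2Pairing (by tauto)
end

section
/- There is no complex number λ satisfying simultaneously 1 + q + (2+q)λ − (1+2q)λ² + q²λ³ = 0 and 1 + q² − λ − (2+q)λ² + q²λ³ + qλ⁴ = 0. -/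
/-!
Modulo `q ^ 2 + q + 1 = 0`, eliminating the leading terms of the quartic with the cubic leaves
three times the quadratic `(1 - q ^ 2) * l ^ 2 + q * l - 1`, and subtracting this quadratic from
`q` times the cubic leaves `l ^ 3 - l`. Hence a common root is `0`, `1` or `-1`, where the quadratic
takes the values `-1`, `q * (1 - q)` and `1`, none of which vanishes.
-/

section CommRing

variable {R : Type*} [CommRing R] {q l : R}

lemma three_mul_quadratic_eq_zero_of_cubic_of_quartic (hq : q ^ 2 + q + 1 = 0)
    (hcubic : 1 + q + (2 + q) * l - (1 + 2 * q) * l ^ 2 + q ^ 2 * l ^ 3 = 0)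
    (hquartic : 1 + q ^ 2 - l - (2 + q) * l ^ 2 + q ^ 2 * l ^ 3 + q * l ^ 4 = 0) :
    3 * ((1 - q ^ 2) * l ^ 2 + q * l - 1) = 0 := by
  linear_combination q ^ 2 * hquartic + (2 - l) * q * hcubic +
    (-(q ^ 2 - q + 3) + (q + 3) * l ^ 2 - q * (q + 1) * l ^ 3) * hq

lemma pow_three_eq_self_of_cubic_of_quadratic (hq : q ^ 2 + q + 1 = 0)
    (hcubic : 1 + q + (2 + q) * l - (1 + 2 * q) * l ^ 2 + q ^ 2 * l ^ 3 = 0)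
    (hquadratic : (1 - q ^ 2) * l ^ 2 + q * l - 1 = 0) :
    l ^ 3 = l := by
  linear_combination q * hcubic - hquadratic + (-1 - l + l ^ 2 - (q - 1) * l ^ 3) * hq

lemma eq_zero_or_eq_one_or_eq_neg_one_of_pow_three_eq_self [NoZeroDivisors R]
    (hl : l ^ 3 = l) :
    l = 0 ∨ l = 1 ∨ l = -1 := by
  have hfactor : l * (l ^ 2 - 1) = 0 := by linear_combination hl
  simpa only [mul_eq_zero, sub_eq_zero, sq_eq_one_iff] using hfactor

end CommRing

section IsDomain

variable {R : Type*} [CommRing R] [IsDomain R] {q l : R}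

lemma sq_add_self_add_one_eq_zero_of_isPrimitiveRoot_three (hq : IsPrimitiveRoot q 3) :
    q ^ 2 + q + 1 = 0 := by
  have hsum := hq.geom_sum_eq_zero (by norm_num)
  simp only [Finset.sum_range_succ, Finset.sum_range_zero] at hsum
  linear_combination hsum

lemma three_ne_zero_of_isPrimitiveRoot_three (hq : IsPrimitiveRoot q 3) : (3 : R) ≠ 0 :=
  mod_cast hq.neZero'.ne

lemma quadratic_ne_zero_of_pow_three_eq_self (hq : IsPrimitiveRoot q 3) (hl : l ^ 3 = l) :
    (1 - q ^ 2) * l ^ 2 + q * l - 1 ≠ 0 := by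
  intro hquadratic
  rcases eq_zero_or_eq_one_or_eq_neg_one_of_pow_three_eq_self hl with rfl | rfl | rfl
  · exact one_ne_zero (α := R) (by linear_combination -hquadratic)
  · have hvalue : q * (1 - q) = 0 := by linear_combination hquadratic
    have hq0 : q ≠ 0 := hq.ne_zero (by norm_num)
    have hq1 : 1 - q ≠ 0 := sub_ne_zero.mpr (hq.ne_one (by norm_num)).symm
    exact mul_ne_zero hq0 hq1 hvalue
  · have hqsq := sq_add_self_add_one_eq_zero_of_isPrimitiveRoot_three hq
    exact one_ne_zero (α := R) (by linear_combination hquadratic + hqsq)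

theorem stmt15_general (hq : IsPrimitiveRoot q 3) :
    ¬ ∃ l : R,
      1 + q + (2 + q) * l - (1 + 2 * q) * l ^ 2 + q ^ 2 * l ^ 3 = 0 ∧
      1 + q ^ 2 - l - (2 + q) * l ^ 2 + q ^ 2 * l ^ 3 + q * l ^ 4 = 0 := by
  rintro ⟨l, hcubic, hquartic⟩
  have hqsq := sq_add_self_add_one_eq_zero_of_isPrimitiveRoot_three hq
  have hthree := three_mul_quadratic_eq_zero_of_cubic_of_quartic hqsq hcubic hquartic
  have hquadratic : (1 - q ^ 2) * l ^ 2 + q * l - 1 = 0 :=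
    (mul_eq_zero.mp hthree).resolve_left (three_ne_zero_of_isPrimitiveRoot_three hq)
  have hl : l ^ 3 = l := pow_three_eq_self_of_cubic_of_quadratic hqsq hcubic hquadratic
  exact quadratic_ne_zero_of_pow_three_eq_self hq hl hquadratic

end IsDomain

theorem stmt15 (q : ℂ) (hq3 : q^3 = 1) (hq1 : q ≠ 1) :
    ¬ ∃ l : ℂ,
      1 + q + (2+q)*l - (1+2*q)*l^2 + q^2*l^3 = 0 ∧
      1 + q^2 - l - (2+q)*l^2 + q^2*l^3 + q*l^4 = 0 :=
  stmt15_general (IsPrimitiveRoot.iff_orderOf.mpr (orderOf_eq_prime hq3 hq1))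
end

section
/- The representation ρ is reducible (i.e., there exists a ρ-invariant subspace of ℂ⁶ other than {0} and ℂ⁶) if and only if λ₁² = −q, or λ₁² = −q², or λ₁³ = q, or λ₁³ = q². -/
open Matrix Polynomial

/-!
The product `(M1 - l⁻¹) (M1 - q²) (M1 - l)` equals `l⁻¹ (w e₅ᵀ - q e₀ ψᵀ)`, where `w` is a fixed
vector of `M1` and `ψ` a linear form with `ψ (M2 w) = -q (l⁴ - l² + 1) = -q (l² + q) (l² + q²)`.
Hence, away from the zeros of this polynomial, an invariant subspace `W` on which the last
coordinate is not identically zero contains `w`, then `M2 w`, then `e₀`. Unless `l³ = q²`, the orbit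
of `e₀` spans `ℂ⁶`, so `W = ⊤`; dually, unless `l³ = q`, the orbit of the last coordinate form spans
the dual space, so a `W` on which that form vanishes is zero. In each excluded case there is a
proper invariant subspace: for `l⁴ - l² + 1 = 0` the three-dimensional one generated by `w`, for
`l³ = q` a plane on which the last coordinate vanishes, and for `l³ = q²` the four-dimensional one
generated by `e₀`.
-/

section Matrix

variable {m n R K : Type*} [Fintype m] [Fintype n]

theorem mulVec_mem_range_mulVecLin [CommSemiring R] {A : Matrix m m R} {P : Matrix m n R}
    {C : Matrix n n R} (h : A * P = P * C) {x : m → R} (hx : x ∈ P.mulVecLin.range) :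
    A *ᵥ x ∈ P.mulVecLin.range := by
  obtain ⟨y, rfl⟩ := hx
  exact ⟨C *ᵥ y, by simp only [mulVecLin_apply, mulVec_mulVec, h]⟩

theorem span_range_eq_top_of_det_ne_zero [DecidableEq n] [Field K] {v : n → n → K}
    (h : (of v).det ≠ 0) : Submodule.span K (Set.range v) = ⊤ :=
  have hv : LinearIndependent K v :=
    linearIndependent_rows_iff_isUnit.mpr ((isUnit_iff_isUnit_det _).mpr h.isUnit)
  hv.span_eq_top_of_card_eq_finrank' (Module.finrank_fintype_fun_eq_card K).symm

end Matrix

/-- The fixed vector `w` of `M1`, for `q` a primitive cube root of unity, scaled so that its entries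
are polynomials in `q` and `l`. -/
noncomputable def fixedVector (q l : ℂ) : Fin 6 → ℂ :=
  ![q * (l ^ 2 - l + 1), l - q ^ 2, -(l - 1) ^ 2, -(l - 1) * (l + q), (2 + q) * l * (1 - l),
    -(2 + q) * (l - 1) ^ 2]

/-- The row vector of the linear form `ψ`, a left eigenvector of `M1` with eigenvalue `q` for `q` a
primitive cube root of unity, scaled so that its entries are polynomials in `q` and `l`. -/
noncomputable def eigenCovector (q l : ℂ) : Fin 6 → ℂ :=
  ![(1 + 2 * q) * (l ^ 2 + l + 1), (1 + 2 * q) * q ^ 2 * l * (l - q ^ 2),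
    -(l + 1) * (l - q ^ 2), q ^ 2 * (l ^ 2 + l + 1), 1 - l, l]

theorem M1_sub_smul_one_mulVec (q l μ : ℂ) (x : Fin 6 → ℂ) :
    (M1 q l - μ • 1) *ᵥ x =
      ![(q - μ) * x 0 - q ^ 2 * l * x 1 + q ^ 2 * x 2 + q ^ 2 * x 3 - q ^ 2 / l * x 4 + x 5,
        (l - μ) * x 1 + q ^ 2 * x 2 + l⁻¹ * x 4 + x 5, (q ^ 2 - μ) * x 2 + x 5,
        (q ^ 2 - μ) * x 3 - q ^ 2 / l * x 4 + x 5, (l⁻¹ - μ) * x 4 + x 5, (1 - μ) * x 5] := by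
  rw [sub_mulVec, smul_mulVec, one_mulVec]
  ext i
  rw [Pi.sub_apply, Pi.smul_apply, smul_eq_mul]
  fin_cases i <;> simp [M1, mulVec, dotProduct, Fin.sum_univ_succ] <;> ring

theorem M1_mulVec_single_zero (q l : ℂ) :
    M1 q l *ᵥ Pi.single 0 1 = q • Pi.single 0 1 := by
  ext i
  fin_cases i <;> simp [M1]

theorem M1_mulVec_fixedVector {q l : ℂ} (hq : q ^ 2 + q + 1 = 0) (hl : l ≠ 0) :
    M1 q l *ᵥ fixedVector q l = fixedVector q l := by
  ext i
  fin_cases i <;> simp [M1, fixedVector, mulVec, dotProduct, Fin.sum_univ_succ] <;> grind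

theorem fixedVector_ne_zero {q l : ℂ} (hq : q ^ 2 + q + 1 = 0) : fixedVector q l ≠ 0 := by
  intro h
  have h₁ : l - q ^ 2 = 0 := congrFun h 1
  have h₂ : -(l - 1) ^ 2 = 0 := congrFun h 2
  grind

theorem M2_mulVec_fixedVector {q l : ℂ} (hq : q ^ 2 + q + 1 = 0) (hl : l ≠ 0) :
    M2 q l *ᵥ fixedVector q l =
      ![q * (l ^ 2 - l + 1), l⁻¹ + 1 + q - q * l, 1 + q - q * l, q * l ^ 2 - (1 + q) * l,
        q * l ^ 2 - (1 + q) * l - l ^ 3, (1 + q) * (l ^ 2 - l + 1)] := by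
  ext i
  fin_cases i <;> simp [M2, fixedVector, mulVec, dotProduct, Fin.sum_univ_succ] <;> grind

theorem M1_mulVec_M2_mulVec_fixedVector {q l : ℂ} (hq : q ^ 2 + q + 1 = 0) (hl : l ≠ 0) :
    M1 q l *ᵥ M2 q l *ᵥ fixedVector q l =
      ![(1 - q) * (l - 1) ^ 2, -(1 - q) * (l - 1), 1 - (2 + q) * l + (1 + q) * l ^ 2,
        (l - 1) ^ 2, q * l ^ 2 - l, (1 + q) * (l ^ 2 - l + 1)] := by
  rw [M2_mulVec_fixedVector hq hl]
  ext i
  fin_cases i <;> simp [M1, mulVec, dotProduct, Fin.sum_univ_succ] <;> grind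

theorem M1_sub_mulVec_sub_mulVec_sub_mulVec {q l : ℂ} (hq : q ^ 2 + q + 1 = 0) (hl : l ≠ 0)
    (x : Fin 6 → ℂ) :
    (M1 q l - l⁻¹ • 1) *ᵥ (M1 q l - q ^ 2 • 1) *ᵥ (M1 q l - l • 1) *ᵥ x =
      l⁻¹ • (x 5 • fixedVector q l - (q * (eigenCovector q l ⬝ᵥ x)) • Pi.single 0 1) := by
  have hL : l * l⁻¹ = 1 := mul_inv_cancel₀ hl
  simp only [M1_sub_smul_one_mulVec, div_eq_mul_inv]
  generalize l⁻¹ = L at *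
  ext i
  simp only [Pi.smul_apply, Pi.sub_apply, smul_eq_mul]
  fin_cases i <;>
    simp [fixedVector, eigenCovector, dotProduct, Fin.sum_univ_succ] <;> grind

theorem eigenCovector_dotProduct_M2_mulVec_fixedVector {q l : ℂ} (hq : q ^ 2 + q + 1 = 0)
    (hl : l ≠ 0) :
    eigenCovector q l ⬝ᵥ M2 q l *ᵥ fixedVector q l = -q * (l ^ 4 - l ^ 2 + 1) := by
  have hL : l * l⁻¹ = 1 := mul_inv_cancel₀ hl
  simp only [div_eq_mul_inv, M2]
  generalize l⁻¹ = L at *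
  simp [fixedVector, eigenCovector, mulVec, dotProduct, Fin.sum_univ_succ]
  grind

theorem pow_four_sub_sq_add_one_eq_zero_iff {q l : ℂ} (hq : q ^ 2 + q + 1 = 0) :
    l ^ 4 - l ^ 2 + 1 = 0 ↔ l ^ 2 = -q ∨ l ^ 2 = -q ^ 2 := by
  have key : l ^ 4 - l ^ 2 + 1 = (l ^ 2 - -q) * (l ^ 2 - -q ^ 2) := by
    linear_combination (-l ^ 2 - q + 1) * hq
  rw [key, mul_eq_zero, sub_eq_zero, sub_eq_zero]

theorem det_orbit_single_zero {q l : ℂ} (hq : q ^ 2 + q + 1 = 0) (hl : l ≠ 0) :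
    (of ![Pi.single 0 1, M2 q l *ᵥ Pi.single 0 1, M2 q l *ᵥ M2 q l *ᵥ Pi.single 0 1,
      M1 q l *ᵥ M1 q l *ᵥ Pi.single 5 1, M1 q l *ᵥ Pi.single 5 1, Pi.single 5 1]).det =
      (l ^ 3 - q ^ 2) ^ 2 / l ^ 3 := by
  have hL : l * l⁻¹ = 1 := mul_inv_cancel₀ hl
  simp only [div_eq_mul_inv, M1, M2, ← inv_pow]
  generalize l⁻¹ = L at *
  simp [det_succ_row_zero, Fin.sum_univ_succ, Fin.succAbove, dotProduct]
  grind

theorem det_orbit_coord_five {q l : ℂ} (hq : q ^ 2 + q + 1 = 0) (hl : l ≠ 0) :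
    (of ![Pi.single 0 1, Pi.single 0 1 ᵥ* M1 q l, Pi.single 0 1 ᵥ* M1 q l ᵥ* M1 q l,
      Pi.single 5 1 ᵥ* M2 q l ᵥ* M2 q l, Pi.single 5 1 ᵥ* M2 q l, Pi.single 5 1]).det =
      (l ^ 3 - q) ^ 2 / l ^ 3 := by
  have hL : l * l⁻¹ = 1 := mul_inv_cancel₀ hl
  simp only [div_eq_mul_inv, M1, M2, ← inv_pow]
  generalize l⁻¹ = L at *
  simp [det_succ_row_zero, Fin.sum_univ_succ, Fin.succAbove]
  grind

theorem M1_mulVec_M2_mulVec_single_zero {q l : ℂ} (hq : q ^ 2 + q + 1 = 0) (hl : l ≠ 0) :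
    M1 q l *ᵥ M2 q l *ᵥ Pi.single 0 1 = -Pi.single 5 1 := by
  ext i
  fin_cases i <;> simp [M1, M2, mulVec, dotProduct, Fin.sum_univ_succ] <;> grind

theorem M2_mulVec_M1_mulVec_apply_five {q : ℂ} (hq : q ^ 2 + q + 1 = 0) (l : ℂ)
    (x : Fin 6 → ℂ) : (M2 q l *ᵥ M1 q l *ᵥ x) 5 = -q * x 0 := by
  simp only [div_eq_mul_inv, M1, M2]
  generalize l⁻¹ = L
  simp [mulVec, dotProduct, Fin.sum_univ_succ]
  grind

namespace RhoInvariant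

variable {q l : ℂ} {W : Submodule ℂ (Fin 6 → ℂ)}

theorem M1_sub_smul_one_mulVec_mem (hW : RhoInvariant q l W) (μ : ℂ) {x : Fin 6 → ℂ}
    (hx : x ∈ W) : (M1 q l - μ • 1) *ᵥ x ∈ W := by
  rw [sub_mulVec, smul_mulVec, one_mulVec]
  exact W.sub_mem (hW.1 x hx) (W.smul_mem μ hx)

theorem smul_fixedVector_sub_mem (hW : RhoInvariant q l W) (hq : q ^ 2 + q + 1 = 0) (hl : l ≠ 0)
    {x : Fin 6 → ℂ} (hx : x ∈ W) :
    x 5 • fixedVector q l - (q * (eigenCovector q l ⬝ᵥ x)) • Pi.single 0 1 ∈ W := by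
  rw [← W.smul_mem_iff (inv_ne_zero hl), ← M1_sub_mulVec_sub_mulVec_sub_mulVec hq hl]
  exact hW.M1_sub_smul_one_mulVec_mem _ <| hW.M1_sub_smul_one_mulVec_mem _ <|
    hW.M1_sub_smul_one_mulVec_mem _ hx

theorem fixedVector_mem (hW : RhoInvariant q l W) (hq : q ^ 2 + q + 1 = 0) (hl : l ≠ 0)
    {x : Fin 6 → ℂ} (hx : x ∈ W) (hx5 : x 5 ≠ 0) : fixedVector q l ∈ W := by
  have hq1 : 1 - q ≠ 0 := by grind
  have h := hW.M1_sub_smul_one_mulVec_mem q (hW.smul_fixedVector_sub_mem hq hl hx)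
  have heq : (M1 q l - q • 1) *ᵥ
      (x 5 • fixedVector q l - (q * (eigenCovector q l ⬝ᵥ x)) • Pi.single 0 1) =
      ((1 - q) * x 5) • fixedVector q l := by
    simp only [sub_mulVec, smul_mulVec, one_mulVec, mulVec_sub, mulVec_smul,
      M1_mulVec_fixedVector hq hl, M1_mulVec_single_zero]
    module
  exact (W.smul_mem_iff (mul_ne_zero hq1 hx5)).mp (heq ▸ h)

theorem single_zero_mem (hW : RhoInvariant q l W) (hq : q ^ 2 + q + 1 = 0) (hl : l ≠ 0)
    (h : l ^ 4 - l ^ 2 + 1 ≠ 0) {x : Fin 6 → ℂ} (hx : x ∈ W) (hx5 : x 5 ≠ 0) :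
    Pi.single 0 1 ∈ W := by
  have hq0 : q ≠ 0 := by grind
  have hw : fixedVector q l ∈ W := hW.fixedVector_mem hq hl hx hx5
  have hψ : eigenCovector q l ⬝ᵥ M2 q l *ᵥ fixedVector q l ≠ 0 := by
    rw [eigenCovector_dotProduct_M2_mulVec_fixedVector hq hl]
    exact mul_ne_zero (neg_ne_zero.mpr hq0) h
  rw [← W.smul_mem_iff (mul_ne_zero hq0 hψ), ← W.sub_mem_iff_right (W.smul_mem _ hw)]
  exact hW.smul_fixedVector_sub_mem hq hl (hW.2 _ hw)

theorem eq_top_of_single_zero_mem (hW : RhoInvariant q l W) (hq : q ^ 2 + q + 1 = 0) (hl : l ≠ 0)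
    (h : l ^ 3 ≠ q ^ 2) (h0 : Pi.single 0 1 ∈ W) : W = ⊤ := by
  have h5 : Pi.single 5 1 ∈ W := by
    rw [← W.neg_mem_iff, ← M1_mulVec_M2_mulVec_single_zero hq hl]
    exact hW.1 _ (hW.2 _ h0)
  have hdet : (l ^ 3 - q ^ 2) ^ 2 / l ^ 3 ≠ 0 :=
    div_ne_zero (pow_ne_zero 2 (sub_ne_zero.mpr h)) (pow_ne_zero 3 hl)
  rw [← det_orbit_single_zero hq hl] at hdet
  rw [eq_top_iff, ← span_range_eq_top_of_det_ne_zero hdet, Submodule.span_le,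
    Set.range_subset_iff]
  intro i
  fin_cases i
  exacts [h0, hW.2 _ h0, hW.2 _ (hW.2 _ h0), hW.1 _ (hW.1 _ h5), hW.1 _ h5, h5]

theorem eq_bot_of_apply_five_eq_zero (hW : RhoInvariant q l W) (hq : q ^ 2 + q + 1 = 0)
    (hl : l ≠ 0) (h : l ^ 3 ≠ q) (h5 : ∀ x ∈ W, x 5 = 0) : W = ⊥ := by
  have hq0 : q ≠ 0 := by grind
  have h0 (x) (hx : x ∈ W) : x 0 = 0 := by
    have hx5 : (M2 q l *ᵥ M1 q l *ᵥ x) 5 = 0 := h5 _ (hW.2 _ (hW.1 x hx))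
    rw [M2_mulVec_M1_mulVec_apply_five hq] at hx5
    exact (mul_eq_zero.mp hx5).resolve_left (neg_ne_zero.mpr hq0)
  have hdet : (l ^ 3 - q) ^ 2 / l ^ 3 ≠ 0 :=
    div_ne_zero (pow_ne_zero 2 (sub_ne_zero.mpr h)) (pow_ne_zero 3 hl)
  rw [← det_orbit_coord_five hq hl] at hdet
  refine (Submodule.eq_bot_iff W).mpr fun x hx ↦ eq_zero_of_mulVec_eq_zero hdet (funext fun i ↦ ?_)
  have h0₀ : Pi.single 0 1 ⬝ᵥ x = 0 := by simpa using h0 x hx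
  have h0₁ : Pi.single 0 1 ᵥ* M1 q l ⬝ᵥ x = 0 := by
    simpa only [← dotProduct_mulVec, single_one_dotProduct] using h0 _ (hW.1 _ hx)
  have h0₂ : Pi.single 0 1 ᵥ* M1 q l ᵥ* M1 q l ⬝ᵥ x = 0 := by
    simpa only [← dotProduct_mulVec, single_one_dotProduct] using h0 _ (hW.1 _ (hW.1 _ hx))
  have h5₀ : Pi.single 5 1 ⬝ᵥ x = 0 := by simpa using h5 x hx
  have h5₁ : Pi.single 5 1 ᵥ* M2 q l ⬝ᵥ x = 0 := by
    simpa only [← dotProduct_mulVec, single_one_dotProduct] using h5 _ (hW.2 _ hx)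
  have h5₂ : Pi.single 5 1 ᵥ* M2 q l ᵥ* M2 q l ⬝ᵥ x = 0 := by
    simpa only [← dotProduct_mulVec, single_one_dotProduct] using h5 _ (hW.2 _ (hW.2 _ hx))
  fin_cases i
  exacts [h0₀, h0₁, h0₂, h5₂, h5₁, h5₀]

theorem eq_bot_or_eq_top (hW : RhoInvariant q l W) (hq : q ^ 2 + q + 1 = 0) (hl : l ≠ 0)
    (h : l ^ 4 - l ^ 2 + 1 ≠ 0) (h₁ : l ^ 3 ≠ q) (h₂ : l ^ 3 ≠ q ^ 2) : W = ⊥ ∨ W = ⊤ := by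
  by_cases h5 : ∀ x ∈ W, x 5 = 0
  · exact .inl (hW.eq_bot_of_apply_five_eq_zero hq hl h₁ h5)
  · push Not at h5
    obtain ⟨x, hx, hx5⟩ := h5
    exact .inr (hW.eq_top_of_single_zero_mem hq hl h₂ (hW.single_zero_mem hq hl h hx hx5))

end RhoInvariant

/-- Reducibility of `ρ`, as in `stmt16`: some invariant subspace is neither `0` nor `ℂ⁶`. -/
def RhoReducible (q l : ℂ) : Prop :=
  ∃ W : Submodule ℂ (Fin 6 → ℂ), RhoInvariant q l W ∧ W ≠ ⊥ ∧ W ≠ ⊤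

theorem RhoReducible.of_mul_eq_mul {q l : ℂ} {k : ℕ} (hk : k < 6) {P : Matrix (Fin 6) (Fin k) ℂ}
    {C₁ C₂ : Matrix (Fin k) (Fin k) ℂ} (hP : P ≠ 0) (h₁ : M1 q l * P = P * C₁)
    (h₂ : M2 q l * P = P * C₂) : RhoReducible q l := by
  refine ⟨P.mulVecLin.range, ⟨fun _ ↦ mulVec_mem_range_mulVecLin h₁,
    fun _ ↦ mulVec_mem_range_mulVecLin h₂⟩, fun hbot ↦ hP ?_, fun htop ↦ ?_⟩
  · exact toLin'.injective ((LinearMap.range_eq_bot.mp hbot).trans (map_zero toLin').symm)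
  · have hrank : P.rank = 6 := by
      rw [Matrix.rank, htop, finrank_top, Module.finrank_fin_fun]
    exact hk.not_ge (hrank ▸ P.rank_le_width)

theorem RhoReducible.of_pow_three_eq {q l : ℂ} (hq : q ^ 2 + q + 1 = 0) (h : l ^ 3 = q) :
    RhoReducible q l := by
  have hL : l * l⁻¹ = 1 := mul_inv_cancel₀ (by grind)
  refine .of_mul_eq_mul (by norm_num)
    (P := !![0, 0; l⁻¹ - q ^ 2, l; 1, 0; 0, 1; l⁻¹, l - q; 0, 0])
    (C₁ := !![q ^ 2, 0; -q * l, l⁻¹]) (C₂ := !![l⁻¹, l; 0, q ^ 2])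
    (fun hP ↦ by simpa using congrFun₂ hP 2 0) ?_ ?_
  all_goals
    ext i j
    simp only [div_eq_mul_inv, M1, M2]
    generalize l⁻¹ = L at *
    fin_cases i <;> fin_cases j <;> simp [Matrix.mul_apply, Fin.sum_univ_succ] <;> grind

theorem RhoReducible.of_pow_three_eq_sq {q l : ℂ} (hq : q ^ 2 + q + 1 = 0) (h : l ^ 3 = q ^ 2) :
    RhoReducible q l := by
  have hL : l * l⁻¹ = 1 := mul_inv_cancel₀ (by grind)
  refine .of_mul_eq_mul (by norm_num)
    (P := (of ![Pi.single 0 1, M2 q l *ᵥ Pi.single 0 1, M1 q l *ᵥ Pi.single 5 1, Pi.single 5 1])ᵀ)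
    (C₁ := !![q, 0, -l⁻¹ - 1 - q ^ 2 * l, 0;
              0, 0, -q ^ 2 * l⁻¹, 0;
              0, 0, l⁻¹ - q, 1;
              0, -1, q * l⁻¹ - q ^ 2, 0])
    (C₂ := !![0, q * l⁻¹ - q ^ 2, 1, 0;
              1, l⁻¹ - q, 0, 0;
              0, q ^ 2 * l⁻¹, 0, 0;
              0, l⁻¹ + 1 + q ^ 2 * l, 0, q])
    (fun hP ↦ by simpa using congrFun₂ hP 0 0) ?_ ?_
  all_goals
    ext i j
    simp only [div_eq_mul_inv, M1, M2]
    generalize l⁻¹ = L at *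
    fin_cases i <;> fin_cases j <;> simp [Matrix.mul_apply, Fin.sum_univ_succ] <;> grind

theorem RhoReducible.of_add_inv_eq {q l c : ℂ} (hq : q ^ 2 + q + 1 = 0)
    (hc : l + l⁻¹ = (1 - q) * c) (hc2 : c ^ 2 = -q ^ 2) : RhoReducible q l := by
  have hl : l ≠ 0 := by grind
  have hL : l * l⁻¹ = 1 := mul_inv_cancel₀ hl
  refine .of_mul_eq_mul (by norm_num)
    (P := (of ![fixedVector q l, M2 q l *ᵥ fixedVector q l,
      M1 q l *ᵥ M2 q l *ᵥ fixedVector q l])ᵀ)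
    (C₁ := !![1, 0, -1 - q ^ 2 * c;
              0, 0, c;
              0, 1, q ^ 2 - q * c])
    (C₂ := !![0, c, 0;
              1, q ^ 2 - q * c, 0;
              0, q + c, 1])
    (fun hP ↦ fixedVector_ne_zero hq (funext fun i ↦ congrFun₂ hP i 0)) ?_ ?_
  all_goals
    rw [M1_mulVec_M2_mulVec_fixedVector hq hl, M2_mulVec_fixedVector hq hl]
    ext i j
    simp only [div_eq_mul_inv, M1, M2]
    generalize l⁻¹ = L at *
    fin_cases i <;> fin_cases j <;>
      simp [Matrix.mul_apply, Fin.sum_univ_succ, fixedVector] <;> grind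

theorem RhoReducible.of_pow_four_sub_sq_add_one_eq_zero {q l : ℂ} (hq : q ^ 2 + q + 1 = 0)
    (h : l ^ 4 - l ^ 2 + 1 = 0) : RhoReducible q l := by
  rcases (pow_four_sub_sq_add_one_eq_zero_iff hq).mp h with h | h
  · exact .of_add_inv_eq hq (c := l⁻¹) (by grind) (by grind)
  · exact .of_add_inv_eq hq (c := l) (by grind) h

theorem stmt16_general (q l : ℂ) (hq3 : q ^ 3 = 1) (hq1 : q ≠ 1) (hl0 : l ≠ 0) :
    (∃ W : Submodule ℂ (Fin 6 → ℂ), RhoInvariant q l W ∧ W ≠ ⊥ ∧ W ≠ ⊤) ↔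
      (l ^ 2 = -q ∨ l ^ 2 = -q ^ 2 ∨ l ^ 3 = q ∨ l ^ 3 = q ^ 2) := by
  have hq : q ^ 2 + q + 1 = 0 := by
    refine (mul_eq_zero.mp ?_).resolve_left (sub_ne_zero.mpr hq1)
    linear_combination hq3
  rw [← or_assoc, ← pow_four_sub_sq_add_one_eq_zero_iff hq]
  constructor
  · rintro ⟨W, hW, hbot, htop⟩
    by_contra! h
    exact (hW.eq_bot_or_eq_top hq hl0 h.1 h.2.1 h.2.2).elim hbot htop
  · rintro (h | h | h)
    · exact RhoReducible.of_pow_four_sub_sq_add_one_eq_zero hq h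
    · exact RhoReducible.of_pow_three_eq hq h
    · exact RhoReducible.of_pow_three_eq_sq hq h

theorem stmt16 (q l : ℂ) (hq3 : q^3 = 1) (hq1 : q ≠ 1) (hl0 : l ≠ 0)
    (hm1 : l ≠ -1) (h1 : l ≠ 1) (hq : l ≠ q) (hq2 : l ≠ q^2) :
    (∃ W : Submodule ℂ (Fin 6 → ℂ), RhoInvariant q l W ∧ W ≠ ⊥ ∧ W ≠ ⊤) ↔
      (l^2 = -q ∨ l^2 = -q^2 ∨ l^3 = q ∨ l^3 = q^2) :=
  stmt16_general q l hq3 hq1 hl0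
end
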